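/- Let G be a weighted graph on the vertex set {1,…,n} (n ≥ 2), let 0 ≤ ε < 1, and let Ḡ be an ε-spectral sparsifier of G. Suppose the Laplacian eigenvalue–degree bounds hold for both G and Ḡ, i.e. for every m ∈ {2,…,n}: d_m(H) − Δ(H_{l_m}) ≤ λ_m(H) ≤ d_{m−1}(H) + (m−1)·a(H) − δ(H_{s_{m−1}}) for H ∈ {G, Ḡ}. Then for every i ∈ {1,…,n−1}: d_i(Ḡ) ≥ ( d_{i+1}(G) − Δ(G_{l_{i+1}}) )·(1 − ε) − i·a(Ḡ) + δ(Ḡ_{s_i}), and moreover d_n(Ḡ) ≥ (1 − ε)·d_n(G). -/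

import Mathlib

open Matrix

/-- The (weighted) degree of vertex `v` in the weighted graph with adjacency
matrix `A`. -/
def wdeg {n : ℕ} (A : Matrix (Fin n) (Fin n) ℝ) (v : Fin n) : ℝ := ∑ u, A v u

/-- The Laplacian matrix `L = diag(deg) - A` of a weighted graph. -/
def lap {n : ℕ} (A : Matrix (Fin n) (Fin n) ℝ) : Matrix (Fin n) (Fin n) ℝ :=
  Matrix.diagonal (wdeg A) - A

/-- `Δ(G_{l_{k+1}})` (1-based `m = k + 1`): the maximum degree of the subgraph of
`G` induced by the highest-degree vertices `σ k, σ (k+1), …, σ (n-1)`, where `σ`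
sorts the vertices by nondecreasing degree. -/
noncomputable def maxDegTop {n : ℕ} (A : Matrix (Fin n) (Fin n) ℝ)
    (σ : Equiv.Perm (Fin n)) (k : Fin n) : ℝ :=
  (Finset.Ici k).sup' ⟨k, Finset.mem_Ici.mpr le_rfl⟩
    fun j => ∑ j' ∈ Finset.Ici k, A (σ j) (σ j')

/-- `δ(G_{s_{k+1}})` (1-based `m = k + 1`): the minimum degree of the subgraph of
`G` induced by the lowest-degree vertices `σ 0, σ 1, …, σ k`, where `σ` sorts the
vertices by nondecreasing degree. -/
noncomputable def minDegBot {n : ℕ} (A : Matrix (Fin n) (Fin n) ℝ)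
    (σ : Equiv.Perm (Fin n)) (k : Fin n) : ℝ :=
  (Finset.Iic k).inf' ⟨k, Finset.mem_Iic.mpr le_rfl⟩
    fun j => ∑ j' ∈ Finset.Iic k, A (σ j) (σ j')

/-- `a(G)`: the maximal edge weight of the weighted graph `G`. -/
noncomputable def maxWeight {n : ℕ} (hn : 0 < n)
    (A : Matrix (Fin n) (Fin n) ℝ) : ℝ :=
  Finset.univ.sup' (Finset.univ_nonempty_iff.mpr ⟨(⟨0, hn⟩, ⟨0, hn⟩)⟩)
    fun p : Fin n × Fin n => A p.1 p.2

/-- The quadratic form of a real symmetric matrix in coordinates along its eigenbasis. -/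
lemma dotProduct_mulVec_eq_sum_eigenvalues {ι : Type*} [Fintype ι] [DecidableEq ι]
    {M : Matrix ι ι ℝ} (hM : M.IsHermitian) (x : ι → ℝ) :
    x ⬝ᵥ M *ᵥ x =
      ∑ i, hM.eigenvalues i * ((hM.eigenvectorBasis i : ι → ℝ) ⬝ᵥ x) ^ 2 := by
  have h := hM.eigenvectorBasis.sum_inner_mul_inner (WithLp.toLp 2 x) (WithLp.toLp 2 (M *ᵥ x))
  simp only [EuclideanSpace.inner_eq_star_dotProduct, star_trivial] at h
  rw [dotProduct_comm, ← h]
  refine Finset.sum_congr rfl fun i _ => ?_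
  have hMt : Mᵀ = M := by simpa [Matrix.IsSymm] using hM
  have key : (M *ᵥ x) ⬝ᵥ (hM.eigenvectorBasis i : ι → ℝ) =
      hM.eigenvalues i * ((hM.eigenvectorBasis i : ι → ℝ) ⬝ᵥ x) := by
    rw [dotProduct_comm, dotProduct_mulVec, ← mulVec_transpose, hMt,
      hM.mulVec_eigenvectorBasis, smul_dotProduct, smul_eq_mul]
  rw [key]
  ring

/-- Parseval's identity for the eigenbasis of a real symmetric matrix. -/
lemma dotProduct_self_eq_sum_eigenvectorBasis {ι : Type*} [Fintype ι] [DecidableEq ι]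
    {M : Matrix ι ι ℝ} (hM : M.IsHermitian) (x : ι → ℝ) :
    x ⬝ᵥ x = ∑ i, ((hM.eigenvectorBasis i : ι → ℝ) ⬝ᵥ x) ^ 2 := by
  have h := hM.eigenvectorBasis.sum_inner_mul_inner (WithLp.toLp 2 x) (WithLp.toLp 2 x)
  simp only [EuclideanSpace.inner_eq_star_dotProduct, star_trivial] at h
  rw [← h]
  refine Finset.sum_congr rfl fun i _ => ?_
  rw [dotProduct_comm x, sq]

/-- Given two families of vectors in `ℝⁿ` and an index `k`, some nonzero vector is orthogonal to
the first family below `k` and to the second family above `k`. -/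
lemma exists_ne_zero_dotProduct_eq_zero_of_lt_and_gt {n : ℕ}
    (u v : Fin n → Fin n → ℝ) (k : Fin n) :
    ∃ x : Fin n → ℝ, x ≠ 0 ∧ (∀ j < k, u j ⬝ᵥ x = 0) ∧ ∀ j, k < j → v j ⬝ᵥ x = 0 := by
  let F : (Fin n → ℝ) →ₗ[ℝ] ({j : Fin n // j ≠ k} → ℝ) :=
    Matrix.mulVecLin (Matrix.of fun j : {j : Fin n // j ≠ k} => if j.1 < k then u j else v j)
  have hF : LinearMap.ker F ≠ ⊥ := F.ker_ne_bot_of_finrank_lt <| by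
    have := k.pos
    simp [Fintype.card_subtype_compl]
    omega
  obtain ⟨x, hx, hx0⟩ := (Submodule.ne_bot_iff _).mp hF
  have hx' (j : Fin n) (hj : j ≠ k) : (if j < k then u j else v j) ⬝ᵥ x = 0 :=
    congrFun (LinearMap.mem_ker.mp hx) ⟨j, hj⟩
  refine ⟨x, hx0, fun j hj => ?_, fun j hj => ?_⟩
  · simpa [hj] using hx' j hj.ne
  · simpa [hj.not_gt] using hx' j hj.ne'

/-- Sorted eigenvalues are monotone in the quadratic form. -/
lemma mul_eigenvalues_le_eigenvalues_of_dotProduct_mulVec_le {n : ℕ}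
    {M N : Matrix (Fin n) (Fin n) ℝ} (hM : M.IsHermitian) (hN : N.IsHermitian)
    {c : ℝ} (hc : 0 ≤ c) (h : ∀ x : Fin n → ℝ, c * (x ⬝ᵥ M *ᵥ x) ≤ x ⬝ᵥ N *ᵥ x)
    {τ τ' : Equiv.Perm (Fin n)} (hτ : Monotone (hM.eigenvalues ∘ τ))
    (hτ' : Monotone (hN.eigenvalues ∘ τ')) (k : Fin n) :
    c * hM.eigenvalues (τ k) ≤ hN.eigenvalues (τ' k) := by
  obtain ⟨x, hx0, hu, hv⟩ := exists_ne_zero_dotProduct_eq_zero_of_lt_and_gt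
    (fun j => (hM.eigenvectorBasis (τ j) : Fin n → ℝ))
    (fun j => (hN.eigenvectorBasis (τ' j) : Fin n → ℝ)) k
  have hlow : hM.eigenvalues (τ k) * (x ⬝ᵥ x) ≤ x ⬝ᵥ M *ᵥ x := by
    rw [dotProduct_mulVec_eq_sum_eigenvalues hM, dotProduct_self_eq_sum_eigenvectorBasis hM,
      Finset.mul_sum, ← Equiv.sum_comp τ, ← Equiv.sum_comp τ (fun i => hM.eigenvalues i * _)]
    refine Finset.sum_le_sum fun j _ => ?_
    rcases lt_or_ge j k with hj | hj
    · simp [hu j hj]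
    · exact mul_le_mul_of_nonneg_right (hτ hj) (sq_nonneg _)
  have hupp : x ⬝ᵥ N *ᵥ x ≤ hN.eigenvalues (τ' k) * (x ⬝ᵥ x) := by
    rw [dotProduct_mulVec_eq_sum_eigenvalues hN, dotProduct_self_eq_sum_eigenvectorBasis hN,
      Finset.mul_sum, ← Equiv.sum_comp τ', ← Equiv.sum_comp τ' (fun i => hN.eigenvalues (τ' k) * _)]
    refine Finset.sum_le_sum fun j _ => ?_
    rcases lt_or_ge k j with hj | hj
    · simp [hv j hj]
    · exact mul_le_mul_of_nonneg_right (hτ' hj) (sq_nonneg _)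
  have hpos : 0 < x ⬝ᵥ x := by simpa using dotProduct_star_self_pos_iff.mpr hx0
  refine le_of_mul_le_mul_right ?_ hpos
  calc c * hM.eigenvalues (τ k) * (x ⬝ᵥ x)
      = c * (hM.eigenvalues (τ k) * (x ⬝ᵥ x)) := mul_assoc _ _ _
    _ ≤ c * (x ⬝ᵥ M *ᵥ x) := mul_le_mul_of_nonneg_left hlow hc
    _ ≤ x ⬝ᵥ N *ᵥ x := h x
    _ ≤ hN.eigenvalues (τ' k) * (x ⬝ᵥ x) := hupp

/-- The Laplacian quadratic form at a basis vector is the degree of the vertex. -/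
lemma single_dotProduct_lap_mulVec_single {n : ℕ} (A : Matrix (Fin n) (Fin n) ℝ)
    (hdiag : ∀ v, A v v = 0) (v : Fin n) :
    Pi.single v 1 ⬝ᵥ lap A *ᵥ Pi.single v 1 = wdeg A v := by
  simp [lap, hdiag]

/-- Lower bounds on the sorted degrees of an `ε`-spectral sparsifier `Ḡ`
(adjacency `A'`) of `G` (adjacency `A`): assuming the Laplacian
eigenvalue–degree bounds for both graphs, for every `i ∈ {1, …, n-1}`,
`d_i(Ḡ) ≥ (d_{i+1}(G) - Δ(G_{l_{i+1}}))(1 - ε) - i a(Ḡ) + δ(Ḡ_{s_i})`,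
and `d_n(Ḡ) ≥ (1 - ε) d_n(G)`. -/
theorem sparsifier_degree_lower_bounds
    {n : ℕ} (hn : 2 ≤ n) (A A' : Matrix (Fin n) (Fin n) ℝ)
    (hsymm : A.IsSymm) (hnonneg : ∀ u v, 0 ≤ A u v) (hdiag : ∀ v, A v v = 0)
    (hsymm' : A'.IsSymm) (hnonneg' : ∀ u v, 0 ≤ A' u v) (hdiag' : ∀ v, A' v v = 0)
    (ε : ℝ) (hε0 : 0 ≤ ε) (hε1 : ε < 1)
    (hspars : ∀ x : Fin n → ℝ,
      (1 - ε) * (x ⬝ᵥ (lap A).mulVec x) ≤ x ⬝ᵥ (lap A').mulVec x ∧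
      x ⬝ᵥ (lap A').mulVec x ≤ (1 + ε) * (x ⬝ᵥ (lap A).mulVec x))
    (σ σ' : Equiv.Perm (Fin n))
    (hσ : Monotone (wdeg A ∘ σ)) (hσ' : Monotone (wdeg A' ∘ σ'))
    (hL : (lap A).IsHermitian) (hL' : (lap A').IsHermitian)
    (τ τ' : Equiv.Perm (Fin n))
    (hτ : Monotone (hL.eigenvalues ∘ τ)) (hτ' : Monotone (hL'.eigenvalues ∘ τ'))
    (hboundG : ∀ (m : ℕ) (hm2 : 2 ≤ m) (hmn : m ≤ n),
      wdeg A (σ ⟨m - 1, by omega⟩) - maxDegTop A σ ⟨m - 1, by omega⟩ ≤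
        hL.eigenvalues (τ ⟨m - 1, by omega⟩) ∧
      hL.eigenvalues (τ ⟨m - 1, by omega⟩) ≤
        wdeg A (σ ⟨m - 2, by omega⟩) + ((m : ℝ) - 1) * maxWeight (by omega) A -
          minDegBot A σ ⟨m - 2, by omega⟩)
    (hboundG' : ∀ (m : ℕ) (hm2 : 2 ≤ m) (hmn : m ≤ n),
      wdeg A' (σ' ⟨m - 1, by omega⟩) - maxDegTop A' σ' ⟨m - 1, by omega⟩ ≤
        hL'.eigenvalues (τ' ⟨m - 1, by omega⟩) ∧
      hL'.eigenvalues (τ' ⟨m - 1, by omega⟩) ≤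
        wdeg A' (σ' ⟨m - 2, by omega⟩) + ((m : ℝ) - 1) * maxWeight (by omega) A' -
          minDegBot A' σ' ⟨m - 2, by omega⟩) :
    (∀ (i : ℕ) (hi1 : 1 ≤ i) (hin : i ≤ n - 1),
      (wdeg A (σ ⟨i, by omega⟩) - maxDegTop A σ ⟨i, by omega⟩) * (1 - ε) -
          (i : ℝ) * maxWeight (by omega) A' + minDegBot A' σ' ⟨i - 1, by omega⟩ ≤
        wdeg A' (σ' ⟨i - 1, by omega⟩)) ∧
    (1 - ε) * wdeg A (σ ⟨n - 1, by omega⟩) ≤ wdeg A' (σ' ⟨n - 1, by omega⟩) := by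
  have hε : 0 ≤ 1 - ε := by linarith
  refine ⟨fun i hi1 hin => ?_, ?_⟩
  · have hA := (hboundG (i + 1) (by omega) (by omega)).1
    have hA' := (hboundG' (i + 1) (by omega) (by omega)).2
    have hev := mul_eigenvalues_le_eigenvalues_of_dotProduct_mulVec_le hL hL' hε
      (fun x => (hspars x).1) hτ hτ' ⟨i, by omega⟩
    simp only [Nat.add_sub_cancel, Nat.cast_add, Nat.cast_one, add_sub_cancel_right,
      show i + 1 - 2 = i - 1 by omega] at hA hA'
    have := mul_le_mul_of_nonneg_left hA hε
    linarith
  · have hdeg := (hspars (Pi.single (σ ⟨n - 1, by omega⟩) 1)).1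
    rw [single_dotProduct_lap_mulVec_single A hdiag,
      single_dotProduct_lap_mulVec_single A' hdiag'] at hdeg
    have hmax : σ'.symm (σ ⟨n - 1, by omega⟩) ≤ ⟨n - 1, by omega⟩ := by
      rw [Fin.le_def]
      exact Nat.le_sub_one_of_lt (Fin.is_lt _)
    have := hσ' hmax
    simp only [Function.comp_apply, Equiv.apply_symm_apply] at this
    exact hdeg.trans this
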